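/- Let 𝒜 be a class of weakly-archimedean linearly ordered FL_ew-algebras containing, for each n, a non-n-contractive algebra, and P a PCP instance. The following are equivalent: (1) P has a solution; (2) Γ_P does not prove □φ_P locally over the class of transitive safe 𝒜-Kripke models; (3) Γ_P does not prove □φ_P locally over the class of finite transitive 𝒜-Kripke models. -/

import Mathlib

/-!
The reduction encodes words as exponents of a single truth value `c`, the value of `y`.

*A solution gives a finite countermodel.* Let `a` be the common concatenation along a solution
`i₁, …, i_k`, and take `c` in a member of the class with `c ^ (2a + 1) ≠ c ^ (2a)`. On the strict
linear order with `k + 1` worlds, let `v` and `w` at the `j`-th world from the bottom be `c` to the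
power of the concatenation of the first `j` words. Prefix concatenations increase, so `□v` at a
world is the value of `v` one world below (and `1 = c ^ 0` at the bottom). This makes `Γ_P` true at
the root, while the world below it has `v = w = c ^ a` and hence refutes `φ_P`.

*A countermodel gives a solution* (`exists_list_of_not_le`). Below the root the value of `y` is a
constant `c`. If `φ_P` fails at `x`, then `v·w` and `v·w·c` differ at `x`, so weak archimedeanity
gives `d` with `v·w ≰ c ^ d`. Unless some pair of `P` is `(0, 0)`, and then it is itself a solution,
formula (2) gives `v·w ≤ □v·□w·c`, so `□v·□w ≰ c ^ (d - 1)` and induction on `d` applies to all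
successors: there `v` and `w` are powers of `c` whose exponents are concatenations along a common
list of indices, of bounded size. Powers of `c` that are not below `c ^ (d - 1)` are pairwise
distinct (`pow_eq_pow_of_not_le`), so the infima `□v`, `□w` and `□(v·w)` are attained, and formula
(3) forces one successor to attain both `□v` and `□w`; formula (2) extends its list by one index.
Finally `v = c ^ a` and `w = c ^ b` with `a ≠ b` would give `(v ↔ w)·v·w ≤ v·w·c`, so the list
found at `x` is a solution.
-/


/-- An FL_ew-algebra: a bounded lattice with a commutative monoid structure whose unit is the
top element, together with a residuum `himp` satisfying the residuation law. -/
class FLew (α : Type) extends Lattice α, BoundedOrder α, CommMonoid α where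
  himp : α → α → α
  mul_le_iff_le_himp : ∀ {a b c : α}, a * b ≤ c ↔ a ≤ himp b c
  one_eq_top : (1 : α) = ⊤

namespace FLew

/-- The lattice order is linear. -/
def isChain (α : Type) [FLew α] : Prop := ∀ a b : α, a ≤ b ∨ b ≤ a

/-- Weakly archimedean: if `a ≤ bⁿ` for all `n` then `a * b = a`. -/
def weaklyArchimedean (α : Type) [FLew α] : Prop :=
  ∀ a b : α, (∀ n : ℕ, a ≤ b ^ n) → a * b = a

/-- `n`-contractive: `a^(n+1) = aⁿ` for every `a`. -/
def contractive (α : Type) [FLew α] (n : ℕ) : Prop :=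
  ∀ a : α, a ^ (n + 1) = a ^ n

end FLew

/-- Modal formulas over a set `V` of propositional variables. -/
inductive MFormula (V : Type) : Type
  | var : V → MFormula V
  | fZero : MFormula V
  | fOne : MFormula V
  | fAnd : MFormula V → MFormula V → MFormula V
  | fOr : MFormula V → MFormula V → MFormula V
  | fMul : MFormula V → MFormula V → MFormula V
  | fImp : MFormula V → MFormula V → MFormula V
  | fBox : MFormula V → MFormula V
  | fDia : MFormula V → MFormula V
  deriving DecidableEq

namespace MFormula

variable {V : Type}

def fNeg (φ : MFormula V) : MFormula V := .fImp φ .fZero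

def fIff (φ ψ : MFormula V) : MFormula V := .fMul (.fImp φ ψ) (.fImp ψ φ)

def fPow (φ : MFormula V) : ℕ → MFormula V
  | 0 => .fOne
  | n + 1 => .fMul (fPow φ n) φ

def bigOr : List (MFormula V) → MFormula V
  | [] => .fZero
  | φ :: l => .fOr φ (bigOr l)

def map {V' : Type} (f : V → V') : MFormula V → MFormula V'
  | .var x => .var (f x)
  | .fZero => .fZero
  | .fOne => .fOne
  | .fAnd φ ψ => .fAnd (map f φ) (map f ψ)
  | .fOr φ ψ => .fOr (map f φ) (map f ψ)
  | .fMul φ ψ => .fMul (map f φ) (map f ψ)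
  | .fImp φ ψ => .fImp (map f φ) (map f ψ)
  | .fBox φ => .fBox (map f φ)
  | .fDia φ => .fDia (map f φ)

end MFormula

/-- A (safe) Kripke model over an FL_ew-algebra `α`: the evaluation `e` is world-wise a
homomorphism on the propositional connectives and interprets `□`/`◇` as the infimum/supremum
of the values at the accessible worlds (which are required to exist: safety). -/
structure KModel (α : Type) [FLew α] (V : Type) where
  W : Type
  nonempty : Nonempty W
  R : W → W → Prop
  e : W → MFormula V → α
  e_zero : ∀ v, e v .fZero = ⊥
  e_one : ∀ v, e v .fOne = 1
  e_and : ∀ v φ ψ, e v (.fAnd φ ψ) = e v φ ⊓ e v ψ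
  e_or : ∀ v φ ψ, e v (.fOr φ ψ) = e v φ ⊔ e v ψ
  e_mul : ∀ v φ ψ, e v (.fMul φ ψ) = e v φ * e v ψ
  e_imp : ∀ v φ ψ, e v (.fImp φ ψ) = FLew.himp (e v φ) (e v ψ)
  e_box : ∀ v φ, IsGLB {a | ∃ w, R v w ∧ e w φ = a} (e v (.fBox φ))
  e_dia : ∀ v φ, IsLUB {a | ∃ w, R v w ∧ e w φ = a} (e v (.fDia φ))

namespace KModel

variable {α V : Type} [FLew α]

/-- The accessibility relation is transitive. -/
def IsTrans (M : KModel α V) : Prop := ∀ a b c : M.W, M.R a b → M.R b c → M.R a c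

/-- The model is finite. -/
def IsFinite (M : KModel α V) : Prop := Finite M.W

/-- The depth of world `w` is at most `k`: every `R`-chain starting at `w` has length `≤ k`. -/
def DepthLE (M : KModel α V) (w : M.W) (k : ℕ) : Prop :=
  ∀ (n : ℕ) (c : Fin (n + 1) → M.W), c 0 = w →
    (∀ i : Fin n, M.R (c i.castSucc) (c i.succ)) → n ≤ k

/-- World `w` has finite depth. -/
def FiniteDepth (M : KModel α V) (w : M.W) : Prop := ∃ k, M.DepthLE w k

end KModel

/-- Local consequence over the models (over the algebras `A i`) satisfying the class
condition `C`. -/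
def LocalConsequence {I : Type} (A : I → Type) [∀ i, FLew (A i)] {V : Type}
    (C : ∀ i, KModel (A i) V → Prop) (Γ : List (MFormula V)) (φ : MFormula V) : Prop :=
  ∀ (i : I) (M : KModel (A i) V), C i M → ∀ v : M.W,
    (∀ γ ∈ Γ, M.e v γ = 1) → M.e v φ = 1

/-- Number of digits of `y` in base `s` (a number always has at least one digit). -/
def numDigits (s y : ℕ) : ℕ := if y = 0 then 1 else (Nat.digits s y).length

/-- Concatenation of the numbers `x` and `y` in base `s`. -/
def concat2 (s x y : ℕ) : ℕ := x * s ^ numDigits s y + y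

/-- Concatenation of a list of numbers in base `s`. -/
def concatList (s : ℕ) (l : List ℕ) : ℕ := l.foldl (concat2 s) 0

/-- An instance of the Post Correspondence Problem: a list of pairs of numbers in base
`s ≥ 2`, without repeated pairs. -/
structure PCPInstance where
  s : ℕ
  hs : 2 ≤ s
  m : ℕ
  v : Fin m → ℕ
  w : Fin m → ℕ
  norep : ∀ i j : Fin m, i ≠ j → v i ≠ v j ∨ w i ≠ w j

/-- A solution of a PCP instance: a nonempty sequence of indices along which the
`v`-concatenation equals the `w`-concatenation. -/
def PCPInstance.HasSolution (P : PCPInstance) : Prop :=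
  ∃ l : List (Fin P.m), l ≠ [] ∧
    concatList P.s (l.map fun i => P.v i) = concatList P.s (l.map fun i => P.w i)

/-- The three variables `y`, `v`, `w` of the reduction. -/
def yv : MFormula (Fin 3) := .var 0
def vv : MFormula (Fin 3) := .var 1
def wv : MFormula (Fin 3) := .var 2

/-- Formula (1) of `Γ_P`: `□y ↔ ◇y`. -/
def gamma1 : MFormula (Fin 3) := MFormula.fIff (.fBox yv) (.fDia yv)

/-- Formula (2) of `Γ_P`. -/
def gamma2 (P : PCPInstance) : MFormula (Fin 3) :=
  .fBox (MFormula.bigOr ((List.finRange P.m).map fun i =>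
    .fAnd
      (MFormula.fIff vv (.fMul (MFormula.fPow (.fBox vv) (P.s ^ numDigits P.s (P.v i)))
        (MFormula.fPow yv (P.v i))))
      (MFormula.fIff wv (.fMul (MFormula.fPow (.fBox wv) (P.s ^ numDigits P.s (P.w i)))
        (MFormula.fPow yv (P.w i))))))

/-- Formula (3) of `Γ_P`: `□(□(v·w) → □v·□w)`. -/
def gamma3 : MFormula (Fin 3) :=
  .fBox (.fImp (.fBox (.fMul vv wv)) (.fMul (.fBox vv) (.fBox wv)))

def GammaP (P : PCPInstance) : List (MFormula (Fin 3)) := [gamma1, gamma2 P, gamma3]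

/-- `φ_P = (v↔w) → (y ∨ (v·w → v·w·y))`. -/
def phiP (_P : PCPInstance) : MFormula (Fin 3) :=
  .fImp (MFormula.fIff vv wv) (.fOr yv (.fImp (.fMul vv wv) (.fMul (.fMul vv wv) yv)))

/-! ### FL_ew-algebras -/

namespace FLew

variable {α : Type} [FLew α]

instance : IsOrderedMonoid α where
  mul_le_mul_left a b h c := by
    have hb : b ≤ himp c (b * c) := mul_le_iff_le_himp.1 le_rfl
    exact mul_le_iff_le_himp.2 (h.trans hb)

theorem le_one (a : α) : a ≤ 1 := by
  rw [one_eq_top]; exact le_top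

theorem eq_one_of_one_le {a : α} (h : 1 ≤ a) : a = 1 := le_antisymm (le_one a) h

theorem himp_eq_one {a b : α} : himp a b = 1 ↔ a ≤ b := by
  constructor
  · intro h
    have := (mul_le_iff_le_himp (a := 1) (b := a) (c := b)).2 h.ge
    simpa using this
  · intro h
    apply eq_one_of_one_le
    rw [← mul_le_iff_le_himp]
    simpa using h

theorem mul_le_left (a b : α) : a * b ≤ a := by
  simpa using mul_le_mul' (le_refl a) (le_one b)

theorem mul_le_right (a b : α) : a * b ≤ b := by
  simpa using mul_le_mul' (le_one a) (le_refl b)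

theorem himp_mul_himp_eq_one {a b : α} : himp a b * himp b a = 1 ↔ a = b := by
  constructor
  · intro h
    have h1 := eq_one_of_one_le (h.ge.trans (mul_le_left _ _))
    have h2 := eq_one_of_one_le (h.ge.trans (mul_le_right _ _))
    exact le_antisymm (himp_eq_one.1 h1) (himp_eq_one.1 h2)
  · rintro rfl
    rw [himp_eq_one.2 le_rfl, one_mul]

theorem pow_anti (c : α) {m n : ℕ} (h : m ≤ n) : c ^ n ≤ c ^ m := by
  obtain ⟨k, rfl⟩ := Nat.exists_eq_add_of_le h
  rw [pow_add]
  exact mul_le_left _ _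

/-- If `c ^ (m + 1)` is no smaller than `c ^ m`, the powers of `c` are constant from `m` on. -/
theorem pow_le_pow_of_le_succ {c : α} {m : ℕ} (h : c ^ m ≤ c ^ (m + 1)) (d : ℕ) :
    c ^ m ≤ c ^ d := by
  induction d with
  | zero => rw [pow_zero]; exact le_one _
  | succ d ih =>
    refine h.trans ?_
    rw [pow_succ, pow_succ]
    exact mul_le_mul' ih le_rfl

/-- The powers of `c` that are not below a fixed power are pairwise distinct. -/
theorem pow_eq_pow_of_not_le {c : α} {m n d : ℕ} (hd : ¬ c ^ m ≤ c ^ d) (hmn : m ≤ n)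
    (h : c ^ m ≤ c ^ n) : m = n := by
  by_contra hne
  exact hd (pow_le_pow_of_le_succ (h.trans (pow_anti c (by omega : m + 1 ≤ n))) d)

end FLew

open FLew

/-! ### Values of formulas in a model -/

namespace KModel

variable {α V : Type} [FLew α] (M : KModel α V)

theorem e_pow (x : M.W) (φ : MFormula V) (n : ℕ) :
    M.e x (MFormula.fPow φ n) = M.e x φ ^ n := by
  induction n with
  | zero => rw [MFormula.fPow, M.e_one, pow_zero]
  | succ n ih => rw [MFormula.fPow, M.e_mul, ih, pow_succ]

theorem e_iff (x : M.W) (φ ψ : MFormula V) :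
    M.e x (MFormula.fIff φ ψ) =
      himp (M.e x φ) (M.e x ψ) * himp (M.e x ψ) (M.e x φ) := by
  rw [MFormula.fIff, M.e_mul, M.e_imp, M.e_imp]

theorem e_box_eq_one {x : M.W} {φ : MFormula V} :
    M.e x (.fBox φ) = 1 ↔ ∀ z, M.R x z → M.e z φ = 1 := by
  constructor
  · intro h z hz
    apply eq_one_of_one_le
    rw [← h]
    exact (M.e_box x φ).1 ⟨z, hz, rfl⟩
  · intro h
    apply eq_one_of_one_le
    apply (M.e_box x φ).2
    rintro _ ⟨z, hz, rfl⟩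
    exact (h z hz).ge

theorem exists_of_e_bigOr_eq_one (hc : isChain α) (hne : (⊥ : α) ≠ 1) (x : M.W) :
    ∀ l : List (MFormula V), M.e x (MFormula.bigOr l) = 1 → ∃ φ ∈ l, M.e x φ = 1 := by
  intro l
  induction l with
  | nil =>
    intro h
    rw [MFormula.bigOr, M.e_zero] at h
    exact absurd h hne
  | cons φ l ih =>
    intro h
    rw [MFormula.bigOr, M.e_or] at h
    rcases hc (M.e x φ) (M.e x (MFormula.bigOr l)) with h' | h'
    · rw [sup_eq_right.2 h'] at h
      obtain ⟨ψ, hψ, h1⟩ := ih h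
      exact ⟨ψ, List.mem_cons_of_mem _ hψ, h1⟩
    · rw [sup_eq_left.2 h'] at h
      exact ⟨φ, List.mem_cons_self, h⟩

theorem e_bigOr_eq_one_of_mem (x : M.W) {φ : MFormula V} (h : M.e x φ = 1) :
    ∀ l : List (MFormula V), φ ∈ l → M.e x (MFormula.bigOr l) = 1 := by
  intro l
  induction l with
  | nil => simp
  | cons ψ l ih =>
    intro hm
    rw [MFormula.bigOr, M.e_or]
    apply eq_one_of_one_le
    rcases List.mem_cons.1 hm with rfl | hm
    · rw [← h]; exact le_sup_left
    · rw [← ih hm]; exact le_sup_right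

end KModel

/-! ### Concatenations -/

/-- The concatenation of the words `f i` for `i` along `l`. -/
def cat {m : ℕ} (s : ℕ) (f : Fin m → ℕ) (l : List (Fin m)) : ℕ :=
  concatList s (l.map fun i => f i)

theorem cat_nil {m : ℕ} (s : ℕ) (f : Fin m → ℕ) : cat s f [] = 0 := rfl

theorem cat_append {m : ℕ} (s : ℕ) (f : Fin m → ℕ) (l : List (Fin m)) (i : Fin m) :
    cat s f (l ++ [i]) = cat s f l * s ^ numDigits s (f i) + f i := by
  simp [cat, concatList, concat2]

theorem cat_take_mono {m s : ℕ} (hs : 2 ≤ s) (f : Fin m → ℕ) (l : List (Fin m)) :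
    Monotone fun n => cat s f (l.take n) := by
  refine monotone_nat_of_le_succ fun n => ?_
  by_cases h : n < l.length
  · rw [List.take_succ_eq_append_getElem h, cat_append]
    have : 0 < s ^ numDigits s (f l[n]) := by positivity
    nlinarith
  · rw [List.take_of_length_le (by omega), List.take_of_length_le (by omega)]

/-! ### From countermodels to solutions -/

theorem exists_forall_le_of_bounded {ι : Type} [Nonempty ι] (f : ι → ℕ) (d : ℕ)
    (h : ∀ i, f i ≤ d) : ∃ i, ∀ j, f j ≤ f i := by
  have hb : BddAbove (Set.range f) := ⟨d, by rintro _ ⟨i, rfl⟩; exact h i⟩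
  obtain ⟨i, hi⟩ := Nat.sSup_mem (Set.range_nonempty f) hb
  exact ⟨i, fun j => hi ▸ le_csSup hb ⟨j, rfl⟩⟩

/-- A nonempty family of pairs of powers of `c` whose coordinatewise infima `B`, `B'` satisfy
`B * B' = inf (cᵃ * cᵇ)` has a member attaining both infima, as long as `B * B'` is not below
some power of `c`. -/
theorem exists_attained {α ι : Type} [FLew α] [Nonempty ι] {c B B' : α} {a b : ι → ℕ} {d : ℕ}
    (hd : ¬ B * B' ≤ c ^ d)
    (hB : IsGLB (Set.range fun i => c ^ a i) B) (hB' : IsGLB (Set.range fun i => c ^ b i) B')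
    (hmul : ∀ z, (∀ i, z ≤ c ^ a i * c ^ b i) → z ≤ B * B') :
    ∃ i, B = c ^ a i ∧ B' = c ^ b i := by
  have hlt : ∀ i, a i + b i ≤ d := by
    intro i
    by_contra hi
    apply hd
    refine (mul_le_mul' (hB.1 ⟨i, rfl⟩) (hB'.1 ⟨i, rfl⟩)).trans ?_
    rw [← pow_add]
    exact pow_anti c (by omega)
  obtain ⟨i₁, h₁⟩ := exists_forall_le_of_bounded (fun i => a i + b i) d hlt
  obtain ⟨i₂, h₂⟩ := exists_forall_le_of_bounded a d fun i => by have := hlt i; omega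
  obtain ⟨i₃, h₃⟩ := exists_forall_le_of_bounded b d fun i => by have := hlt i; omega
  have e₂ : B = c ^ a i₂ := by
    apply le_antisymm (hB.1 ⟨i₂, rfl⟩)
    apply hB.2
    rintro _ ⟨j, rfl⟩
    exact pow_anti c (h₂ j)
  have e₃ : B' = c ^ b i₃ := by
    apply le_antisymm (hB'.1 ⟨i₃, rfl⟩)
    apply hB'.2
    rintro _ ⟨j, rfl⟩
    exact pow_anti c (h₃ j)
  have hle : c ^ (a i₁ + b i₁) ≤ B * B' := by
    apply hmul
    intro j
    rw [← pow_add]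
    exact pow_anti c (h₁ j)
  have hge : B * B' ≤ c ^ (a i₁ + b i₁) := by
    rw [pow_add]
    exact mul_le_mul' (hB.1 ⟨i₁, rfl⟩) (hB'.1 ⟨i₁, rfl⟩)
  have heq : a i₁ + b i₁ = a i₂ + b i₃ := by
    refine pow_eq_pow_of_not_le (c := c) (d := d) (fun h => hd (hge.trans h))
      (add_le_add (h₂ i₁) (h₃ i₁)) ?_
    rw [pow_add c (a i₂), ← e₂, ← e₃]
    exact hle
  have := h₂ i₁
  have := h₃ i₁
  exact ⟨i₁, by rw [e₂]; congr 1; omega, by rw [e₃]; congr 1; omega⟩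

/-- Decoding: let `S` be a set of worlds closed under `R`, on which `V` and `V'` (with infima `B`
and `B'` over the successors) satisfy formulas (2) and (3) with the constant value `c` of `y`. If
`V x * V' x` is not below some power of `c`, then `V x` and `V' x` are the powers of `c` given by
the two concatenations along one nonempty list of indices. -/
theorem exists_list_of_not_le {α W : Type} [FLew α] (P : PCPInstance)
    (h0 : ∀ i, P.v i ≠ 0 ∨ P.w i ≠ 0) (R : W → W → Prop) (S : W → Prop)
    (hS : ∀ x z, S x → R x z → S z) (V V' B B' : W → α) (c : α)
    (hB : ∀ x, IsGLB {a | ∃ z, R x z ∧ V z = a} (B x))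
    (hB' : ∀ x, IsGLB {a | ∃ z, R x z ∧ V' z = a} (B' x))
    (h2 : ∀ x, S x → ∃ i, V x = B x ^ (P.s ^ numDigits P.s (P.v i)) * c ^ P.v i ∧
      V' x = B' x ^ (P.s ^ numDigits P.s (P.w i)) * c ^ P.w i)
    (h3 : ∀ x, S x → ∀ z, (∀ t, R x t → z ≤ V t * V' t) → z ≤ B x * B' x) :
    ∀ (d : ℕ) (x : W), S x → ¬ V x * V' x ≤ c ^ d →
      ∃ l : List (Fin P.m), l ≠ [] ∧ V x = c ^ cat P.s P.v l ∧ V' x = c ^ cat P.s P.w l := by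
  intro d
  induction d with
  | zero =>
    intro x _ h
    rw [pow_zero] at h
    exact absurd (le_one _) h
  | succ d ih =>
    intro x hx hd
    obtain ⟨i, hV, hV'⟩ := h2 x hx
    have hs : P.s ≠ 0 := by have := P.hs; omega
    have hle : V x * V' x ≤ B x * B' x * c := by
      have hp : ∀ (b : α) (k : ℕ), b ^ (P.s ^ k) ≤ b := fun b k => by
        simpa using pow_anti b (Nat.one_le_iff_ne_zero.2 (pow_ne_zero k hs))
      have hc : c ^ P.v i * c ^ P.w i ≤ c := by
        rw [← pow_add]
        have := h0 i
        simpa using pow_anti c (by omega : 1 ≤ P.v i + P.w i)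
      rw [hV, hV', mul_mul_mul_comm]
      exact mul_le_mul' (mul_le_mul' (hp _ _) (hp _ _)) hc
    have hd' : ¬ B x * B' x ≤ c ^ d := by
      intro h
      apply hd
      rw [pow_succ]
      exact hle.trans (mul_le_mul' h le_rfl)
    obtain ⟨l, hl, hl'⟩ : ∃ l : List (Fin P.m),
        B x = c ^ cat P.s P.v l ∧ B' x = c ^ cat P.s P.w l := by
      rcases isEmpty_or_nonempty {z // R x z} with he | hne
      · have hno : ∀ z, ¬ R x z := fun z hz => he.false ⟨z, hz⟩
        refine ⟨[], ?_, ?_⟩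
        · rw [cat_nil, pow_zero]
          exact eq_one_of_one_le ((hB x).2 (by rintro _ ⟨z, hz, _⟩; exact absurd hz (hno z)))
        · rw [cat_nil, pow_zero]
          exact eq_one_of_one_le ((hB' x).2 (by rintro _ ⟨z, hz, _⟩; exact absurd hz (hno z)))
      · have key : ∀ z : {z // R x z}, ∃ l : List (Fin P.m), l ≠ [] ∧
            V z = c ^ cat P.s P.v l ∧ V' z = c ^ cat P.s P.w l := by
          intro z
          refine ih z (hS x z hx z.2) fun h => hd' ?_
          exact (mul_le_mul' ((hB x).1 ⟨z, z.2, rfl⟩) ((hB' x).1 ⟨z, z.2, rfl⟩)).trans h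
        choose L _ hL hL' using key
        have r : {a | ∃ z, R x z ∧ V z = a} = Set.range fun z => c ^ cat P.s P.v (L z) := by
          ext a
          simp [← hL]
        have r' : {a | ∃ z, R x z ∧ V' z = a} = Set.range fun z => c ^ cat P.s P.w (L z) := by
          ext a
          simp [← hL']
        obtain ⟨z, hz, hz'⟩ := exists_attained hd' (r ▸ hB x) (r' ▸ hB' x) fun t ht =>
          h3 x hx t fun z hz => by
            have := ht ⟨z, hz⟩
            rwa [← hL, ← hL'] at this
        exact ⟨L z, hz, hz'⟩
    refine ⟨l ++ [i], by simp, ?_, ?_⟩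
    · rw [hV, hl, cat_append, pow_add, pow_mul]
    · rw [hV', hl', cat_append, pow_add, pow_mul]

/-- If `a < b`, the residuum of `cᵃ` and `cᵇ` turns `cᵃ⁺ᵇ` into a value below `cᵃ⁺ᵇ⁺¹`. -/
theorem himp_pow_mul_le {α : Type} [FLew α] {c : α} {a b : ℕ} (h : a < b) :
    himp (c ^ a) (c ^ b) * (c ^ a * c ^ b) ≤ c ^ a * c ^ b * c := by
  have h1 : himp (c ^ a) (c ^ b) * c ^ a ≤ c ^ (a + 1) :=
    (mul_le_iff_le_himp.2 le_rfl).trans (pow_anti c h)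
  calc himp (c ^ a) (c ^ b) * (c ^ a * c ^ b)
      = himp (c ^ a) (c ^ b) * c ^ a * c ^ b := (mul_assoc _ _ _).symm
    _ ≤ c ^ (a + 1) * c ^ b := mul_le_mul' h1 le_rfl
    _ = c ^ a * c ^ b * c := by rw [pow_succ, mul_right_comm]

theorem hasSolution_of_countermodel {α : Type} [FLew α] (hc : isChain α)
    (hwa : weaklyArchimedean α) (P : PCPInstance) (M : KModel α (Fin 3)) (hT : M.IsTrans)
    (u : M.W) (hΓ : ∀ γ ∈ GammaP P, M.e u γ = 1) (hφ : M.e u (.fBox (phiP P)) ≠ 1) :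
    P.HasSolution := by
  by_cases h0 : ∀ i, P.v i ≠ 0 ∨ P.w i ≠ 0
  swap
  · push Not at h0
    obtain ⟨i, hi, hi'⟩ := h0
    exact ⟨[i], by simp, by simp [hi, hi']⟩
  have g1 : M.e u gamma1 = 1 := hΓ _ (by simp [GammaP])
  have g2 : M.e u (gamma2 P) = 1 := hΓ _ (by simp [GammaP])
  have g3 : M.e u gamma3 = 1 := hΓ _ (by simp [GammaP])
  rw [Ne, M.e_box_eq_one] at hφ
  push Not at hφ
  obtain ⟨x, hux, hx⟩ := hφ
  -- In the trivial algebra every formula has value `1`.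
  have hne : (⊥ : α) ≠ 1 := fun h => hx (eq_one_of_one_le (h ▸ bot_le))
  rw [gamma1, M.e_iff, himp_mul_himp_eq_one] at g1
  rw [gamma2, M.e_box_eq_one] at g2
  rw [gamma3, M.e_box_eq_one] at g3
  have hy : ∀ z, M.R u z → M.e z yv = M.e x yv := by
    have key : ∀ z t, M.R u z → M.R u t → M.e z yv ≤ M.e t yv := by
      intro z t hz ht
      calc M.e z yv ≤ M.e u (.fDia yv) := (M.e_dia u yv).1 ⟨z, hz, rfl⟩
        _ = M.e u (.fBox yv) := g1.symm
        _ ≤ M.e t yv := (M.e_box u yv).1 ⟨t, ht, rfl⟩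
    exact fun z hz => le_antisymm (key z x hz hux) (key x z hux hz)
  rw [phiP, M.e_imp, Ne, himp_eq_one, M.e_iff, M.e_or, M.e_imp, M.e_mul, M.e_mul, M.e_mul] at hx
  have hx' : ¬ himp (M.e x vv) (M.e x wv) * himp (M.e x wv) (M.e x vv) *
      (M.e x vv * M.e x wv) ≤ M.e x vv * M.e x wv * M.e x yv := fun h =>
    hx ((mul_le_iff_le_himp.1 h).trans le_sup_right)
  obtain ⟨d, hd⟩ : ∃ d : ℕ, ¬ M.e x vv * M.e x wv ≤ M.e x yv ^ d := by
    by_contra h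
    push Not at h
    exact hx' ((mul_le_right _ _).trans (hwa _ _ h).ge)
  obtain ⟨l, hl, hv, hw⟩ := exists_list_of_not_le P h0 M.R (M.R u)
    (fun z t hz ht => hT u z t hz ht) (fun z => M.e z vv) (fun z => M.e z wv)
    (fun z => M.e z (.fBox vv)) (fun z => M.e z (.fBox wv)) (M.e x yv)
    (fun z => M.e_box z vv) (fun z => M.e_box z wv)
    (by
      intro z hz
      obtain ⟨ψ, hψ, h1⟩ := M.exists_of_e_bigOr_eq_one hc hne z _ (g2 z hz)
      obtain ⟨i, -, rfl⟩ := List.mem_map.1 hψ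
      rw [M.e_and] at h1
      have ha := eq_one_of_one_le (h1.ge.trans inf_le_left)
      have hb := eq_one_of_one_le (h1.ge.trans inf_le_right)
      rw [M.e_iff, himp_mul_himp_eq_one, M.e_mul, M.e_pow, M.e_pow, hy z hz] at ha hb
      exact ⟨i, ha, hb⟩)
    (by
      intro z hz t ht
      have h := g3 z hz
      rw [M.e_imp, himp_eq_one, M.e_mul] at h
      refine le_trans ((M.e_box z _).2 ?_) h
      rintro _ ⟨r, hr, rfl⟩
      rw [M.e_mul]
      exact ht r hr)
    d x hux hd
  refine ⟨l, hl, ?_⟩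
  change cat P.s P.v l = cat P.s P.w l
  rw [hv, hw] at hx'
  by_contra hab
  apply hx'
  rcases Nat.lt_or_gt_of_ne hab with h | h
  · exact (mul_le_mul' (mul_le_left _ _) le_rfl).trans (himp_pow_mul_le h)
  · rw [mul_comm (M.e x yv ^ cat P.s P.v l)]
    exact (mul_le_mul' (mul_le_right _ _) le_rfl).trans (himp_pow_mul_le h)

/-! ### From solutions to finite countermodels -/

open Classical in
/-- The evaluation of formulas in a finite frame, extending the valuation `val` of the variables;
`□` and `◇` are finite meets and joins over the successors. -/
noncomputable def finEval {α V W : Type} [FLew α] [Fintype W] (R : W → W → Prop)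
    (val : W → V → α) : MFormula V → W → α
  | .var p, x => val x p
  | .fZero, _ => ⊥
  | .fOne, _ => 1
  | .fAnd φ ψ, x => finEval R val φ x ⊓ finEval R val ψ x
  | .fOr φ ψ, x => finEval R val φ x ⊔ finEval R val ψ x
  | .fMul φ ψ, x => finEval R val φ x * finEval R val ψ x
  | .fImp φ ψ, x => himp (finEval R val φ x) (finEval R val ψ x)
  | .fBox φ, x => (Finset.univ.filter (R x)).inf (finEval R val φ)
  | .fDia φ, x => (Finset.univ.filter (R x)).sup (finEval R val φ)

/-- The Kripke model on a finite frame determined by a valuation of the variables. -/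
noncomputable def finModel {α V W : Type} [FLew α] [Fintype W] [Nonempty W] (R : W → W → Prop)
    (val : W → V → α) : KModel α V where
  W := W
  nonempty := inferInstance
  R := R
  e x φ := finEval R val φ x
  e_zero _ := rfl
  e_one _ := rfl
  e_and _ _ _ := rfl
  e_or _ _ _ := rfl
  e_mul _ _ _ := rfl
  e_imp _ _ _ := rfl
  e_box x φ := by
    constructor
    · rintro _ ⟨z, hz, rfl⟩
      exact Finset.inf_le (by simpa using hz)
    · intro t ht
      exact Finset.le_inf fun z hz => ht ⟨z, by simpa using hz, rfl⟩
  e_dia x φ := by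
    constructor
    · rintro _ ⟨z, hz, rfl⟩
      exact Finset.le_sup (f := finEval R val φ) (by simpa using hz)
    · intro t ht
      exact Finset.sup_le fun z hz => ht ⟨z, by simpa using hz, rfl⟩

/-- On worlds ordered by their height `p`, a decreasing family of powers of `c` has its infimum
below a world `x` at height `p x - 1`; if `p x = 0`, it is `1 = c ^ F 0`. -/
theorem isGLB_chain {α W : Type} [FLew α] (c : α) {k : ℕ} {F : ℕ → ℕ} (hF : Monotone F)
    (hF0 : F 0 = 0) {R : W → W → Prop} {p : W → ℕ} (hR : ∀ x z, R x z ↔ p z < p x)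
    (hpk : ∀ x, p x ≤ k) (hp : ∀ n ≤ k, ∃ x, p x = n) {g : W → α}
    (hg : ∀ x, g x = c ^ F (p x + 1)) (x : W) :
    IsGLB {a | ∃ z, R x z ∧ g z = a} (c ^ F (p x)) := by
  constructor
  · rintro _ ⟨z, hz, rfl⟩
    rw [hg]
    exact pow_anti c (hF (Nat.succ_le_of_lt ((hR x z).1 hz)))
  · intro t ht
    rcases Nat.eq_zero_or_pos (p x) with h | h
    · rw [h, hF0, pow_zero]
      exact le_one t
    · obtain ⟨z, hz⟩ := hp (p x - 1) (by have := hpk x; omega)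
      have := ht ⟨z, (hR x z).2 (by omega), rfl⟩
      rwa [hg, hz, Nat.sub_add_cancel h] at this

/-- A model whose worlds form a finite chain of height `l.length`, where `y` is constantly `c` and
`v` and `w` at height `j` are `c` to the power of the concatenation of the first `j + 1` words of
a solution `l`, is a countermodel at its root `u`. -/
theorem refutes_of_chain {α : Type} [FLew α] (hc : isChain α) (P : PCPInstance)
    (l : List (Fin P.m)) (hl : l ≠ []) (heq : cat P.s P.v l = cat P.s P.w l) (c : α)
    (hcn : c ^ (2 * cat P.s P.v l + 1) ≠ c ^ (2 * cat P.s P.v l))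
    (M : KModel α (Fin 3)) (p : M.W → ℕ) (hR : ∀ x z, M.R x z ↔ p z < p x)
    (hpk : ∀ x, p x ≤ l.length) (hp : ∀ n ≤ l.length, ∃ x, p x = n)
    (ey : ∀ x, M.e x yv = c)
    (ev : ∀ x, M.e x vv = c ^ cat P.s P.v (l.take (p x + 1)))
    (ew : ∀ x, M.e x wv = c ^ cat P.s P.w (l.take (p x + 1)))
    (u : M.W) (hu : p u = l.length) :
    (∀ γ ∈ GammaP P, M.e u γ = 1) ∧ M.e u (.fBox (phiP P)) ≠ 1 := by
  have hlen : 0 < l.length := List.length_pos_iff.2 hl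
  have mv := cat_take_mono P.hs P.v l
  have mw := cat_take_mono P.hs P.w l
  have bv : ∀ x, M.e x (.fBox vv) = c ^ cat P.s P.v (l.take (p x)) :=
    fun x => (M.e_box x vv).unique (isGLB_chain c mv rfl hR hpk hp ev x)
  have bw : ∀ x, M.e x (.fBox wv) = c ^ cat P.s P.w (l.take (p x)) :=
    fun x => (M.e_box x wv).unique (isGLB_chain c mw rfl hR hpk hp ew x)
  have bvw : ∀ x, M.e x (.fBox (.fMul vv wv)) =
      c ^ (cat P.s P.v (l.take (p x)) + cat P.s P.w (l.take (p x))) :=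
    fun x => (M.e_box x _).unique (isGLB_chain c (mv.add mw) rfl hR hpk hp
      (fun z => by rw [M.e_mul, ev, ew, ← pow_add]) x)
  constructor
  · have g1 : M.e u gamma1 = 1 := by
      rw [gamma1, M.e_iff, himp_mul_himp_eq_one]
      have hset : {a | ∃ z, M.R u z ∧ M.e z yv = a} = {c} := by
        ext a
        constructor
        · rintro ⟨z, _, rfl⟩
          exact ey z
        · rintro rfl
          obtain ⟨z, hz⟩ := hp 0 (Nat.zero_le _)
          exact ⟨z, (hR u z).2 (by omega), ey z⟩
      have hb := M.e_box u yv
      have hd := M.e_dia u yv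
      rw [hset] at hb hd
      rw [hb.unique isGLB_singleton, hd.unique isLUB_singleton]
    have g2 : M.e u (gamma2 P) = 1 := by
      rw [gamma2, M.e_box_eq_one]
      intro x hx
      have hx' : p x < l.length := hu ▸ (hR u x).1 hx
      refine M.e_bigOr_eq_one_of_mem x ?_ _
        (List.mem_map.2 ⟨l[p x], List.mem_finRange _, rfl⟩)
      rw [M.e_and]
      apply eq_one_of_one_le
      apply le_inf
      · apply Eq.ge
        rw [M.e_iff, himp_mul_himp_eq_one, M.e_mul, M.e_pow, M.e_pow, ev, bv, ey,
          List.take_succ_eq_append_getElem hx', cat_append, pow_add, pow_mul]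
      · apply Eq.ge
        rw [M.e_iff, himp_mul_himp_eq_one, M.e_mul, M.e_pow, M.e_pow, ew, bw, ey,
          List.take_succ_eq_append_getElem hx', cat_append, pow_add, pow_mul]
    have g3 : M.e u gamma3 = 1 := by
      rw [gamma3, M.e_box_eq_one]
      intro x _
      rw [M.e_imp, himp_eq_one, M.e_mul, bvw, bv, bw, pow_add]
    intro γ hγ
    simp only [GammaP, List.mem_cons, List.not_mem_nil, or_false] at hγ
    rcases hγ with rfl | rfl | rfl
    · exact g1
    · exact g2
    · exact g3
  · intro h
    rw [M.e_box_eq_one] at h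
    -- The world just below the root carries the full concatenations.
    obtain ⟨x, hx⟩ := hp (l.length - 1) (by omega)
    have hφ := h x ((hR u x).2 (by omega))
    have htake : l.take (p x + 1) = l := List.take_of_length_le (by omega)
    have hv : M.e x vv = c ^ cat P.s P.v l := by rw [ev, htake]
    have hw : M.e x wv = c ^ cat P.s P.v l := by rw [ew, htake, heq]
    rw [phiP, M.e_imp, himp_eq_one, M.e_iff, himp_mul_himp_eq_one.2 (hv.trans hw.symm), M.e_or,
      M.e_imp, M.e_mul, M.e_mul, M.e_mul, hv, hw, ey, ← pow_add, ← two_mul, ← pow_succ] at hφ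
    apply hcn
    rcases hc c (himp (c ^ (2 * cat P.s P.v l)) (c ^ (2 * cat P.s P.v l + 1))) with h' | h'
    · rw [sup_eq_right.2 h'] at hφ
      exact le_antisymm (pow_anti c (Nat.le_succ _)) (himp_eq_one.1 (eq_one_of_one_le hφ))
    · rw [sup_eq_left.2 h'] at hφ
      rw [eq_one_of_one_le hφ, one_pow, one_pow]

theorem exists_countermodel {α : Type} [FLew α] (hc : isChain α) (P : PCPInstance)
    (l : List (Fin P.m)) (hl : l ≠ []) (heq : cat P.s P.v l = cat P.s P.w l) (c : α)
    (hcn : c ^ (2 * cat P.s P.v l + 1) ≠ c ^ (2 * cat P.s P.v l)) :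
    ∃ M : KModel α (Fin 3), (M.IsTrans ∧ M.IsFinite) ∧
      ∃ u : M.W, (∀ γ ∈ GammaP P, M.e u γ = 1) ∧ M.e u (.fBox (phiP P)) ≠ 1 :=
  ⟨finModel (fun i j : Fin (l.length + 1) => j < i) fun j =>
      ![c, c ^ cat P.s P.v (l.take (j + 1)), c ^ cat P.s P.w (l.take (j + 1))],
    ⟨fun _ _ _ hab hbd => lt_trans (α := Fin (l.length + 1)) hbd hab,
      inferInstanceAs (Finite (Fin (l.length + 1)))⟩,
    Fin.last l.length,
    refutes_of_chain hc P l hl heq c hcn _ (fun j : Fin (l.length + 1) => (j : ℕ))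
      (fun _ _ => Iff.rfl) (fun j : Fin (l.length + 1) => Nat.le_of_lt_succ j.isLt)
      (fun n hn => ⟨(⟨n, Nat.lt_succ_of_le hn⟩ : Fin (l.length + 1)), rfl⟩)
      (fun _ => rfl) (fun _ => rfl) (fun _ => rfl) _ rfl⟩

/-- **Proposition.** For any PCP instance `P` and any class `𝒜` of weakly-archimedean
linearly ordered FL_ew-algebras with non-`n`-contractive members for every `n`, the
following are equivalent: `P` has a solution; `Γ_P` does not locally entail `□φ_P` over
the transitive safe `𝒜`-Kripke models; `Γ_P` does not locally entail `□φ_P` over the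
finite transitive `𝒜`-Kripke models. -/
theorem pcp_reduction
    {I : Type} (A : I → Type) [inst : ∀ i, FLew (A i)]
    (hchain : ∀ i, FLew.isChain (A i))
    (hwa : ∀ i, FLew.weaklyArchimedean (A i))
    (hnc : ∀ n : ℕ, ∃ i, ¬ FLew.contractive (A i) n)
    (P : PCPInstance) :
    (P.HasSolution ↔
      ¬ LocalConsequence A (fun _ M => M.IsTrans) (GammaP P) (.fBox (phiP P))) ∧
    (¬ LocalConsequence A (fun _ M => M.IsTrans) (GammaP P) (.fBox (phiP P)) ↔
      ¬ LocalConsequence A (fun _ M => M.IsTrans ∧ M.IsFinite) (GammaP P)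
          (.fBox (phiP P))) := by
  have h12 : ¬ LocalConsequence A (fun _ M => M.IsTrans) (GammaP P) (.fBox (phiP P)) →
      P.HasSolution := by
    intro h
    unfold LocalConsequence at h
    push Not at h
    obtain ⟨i, M, hM, u, hΓ, hφ⟩ := h
    exact hasSolution_of_countermodel (hchain i) (hwa i) P M hM u hΓ hφ
  have h31 : P.HasSolution → ¬ LocalConsequence A (fun _ M => M.IsTrans ∧ M.IsFinite) (GammaP P)
      (.fBox (phiP P)) := by
    rintro ⟨l, hl, heq⟩ h
    obtain ⟨i, hi⟩ := hnc (2 * cat P.s P.v l)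
    unfold FLew.contractive at hi
    push Not at hi
    obtain ⟨c, hcn⟩ := hi
    obtain ⟨M, hM, u, hΓ, hφ⟩ := exists_countermodel (hchain i) P l hl heq c hcn
    exact hφ (h i M hM u hΓ)
  have h23 : ¬ LocalConsequence A (fun _ M => M.IsTrans ∧ M.IsFinite) (GammaP P)
      (.fBox (phiP P)) → ¬ LocalConsequence A (fun _ M => M.IsTrans) (GammaP P)
      (.fBox (phiP P)) := fun h h' => h fun i M hM => h' i M hM.1
  exact ⟨⟨fun h => h23 (h31 h), h12⟩, fun h => h31 (h12 h), h23⟩
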